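/- arXiv:1911.05555 — 2 statements merged into one kernel-verified Lean document; each statement's English description precedes it below -/
import Mathlib

section
/- For any fixed K, k ∈ T^d, the operator h(K,k) has at most one eigenvalue in (−∞, E_min(K,k)) and at most one eigenvalue in (E_max(K,k), +∞), and each such eigenvalue is simple (its eigenspace is one-dimensional). -/
open MeasureTheory Complex Filter Topology Set

noncomputable section

instance fact2pi : Fact (0 < 2 * Real.pi) := ⟨by positivity⟩

/-- The d-dimensional torus `(-π, π]^d` with its Haar (Lebesgue) measure. -/
abbrev Td (d : ℕ) : Type := Fin d → AddCircle (2 * Real.pi)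

/-- The Hilbert space `L²(T^d)`. -/
abbrev L2 (d : ℕ) := Lp ℂ 2 (volume : Measure (Td d))

/-- The Hilbert space `L²((T^d)²)`. -/
abbrev L2two (d : ℕ) := Lp ℂ 2 (volume : Measure (Td d × Td d))

/-- The Hilbert space `ℂ ⊕ L²(T^d)`. -/
abbrev Hkk (d : ℕ) := WithLp 2 (ℂ × L2 d)

/-- The zero-particle component of an element of `ℂ ⊕ L²(T^d)`. -/
def pk1 {d : ℕ} (f : Hkk d) : ℂ := (WithLp.equiv 2 (ℂ × L2 d) f).1

/-- The one-particle component of an element of `ℂ ⊕ L²(T^d)`. -/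
def pk2 {d : ℕ} (f : Hkk d) : L2 d := (WithLp.equiv 2 (ℂ × L2 d) f).2

variable {d : ℕ}

/-- `E_min(K,k) = min_q w₂(K; k, q)`. -/
def Emin (w₂ : Td d → Td d → Td d → ℝ) (K k : Td d) : ℝ := ⨅ q, w₂ K k q

/-- `E_max(K,k) = max_q w₂(K; k, q)`. -/
def Emax (w₂ : Td d → Td d → Td d → ℝ) (K k : Td d) : ℝ := ⨆ q, w₂ K k q

/-- `m_K = min_{p,q} w₂(K; p, q)`. -/
def mK (w₂ : Td d → Td d → Td d → ℝ) (K : Td d) : ℝ := ⨅ x : Td d × Td d, w₂ K x.1 x.2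

/-- `M_K = max_{p,q} w₂(K; p, q)`. -/
def MK (w₂ : Td d → Td d → Td d → ℝ) (K : Td d) : ℝ := ⨆ x : Td d × Td d, w₂ K x.1 x.2

/-- The Fredholm determinant
`Δ_K(k; z) = w₁(K,k) − z − (1/2) ∫ v₁(t)² / (w₂(K;k,t) − z) dt`. -/
def Delta (v₁ : Td d → ℝ) (w₁ : Td d → Td d → ℝ) (w₂ : Td d → Td d → Td d → ℝ)
    (K k : Td d) (z : ℂ) : ℂ :=
  (w₁ K k : ℂ) - z - (1 / 2) * ∫ t, (v₁ t : ℂ) ^ 2 / ((w₂ K k t : ℂ) - z)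

/-- The interval `[E_min(K,k), E_max(K,k)]`, viewed inside `ℂ`. -/
def bandKk (w₂ : Td d → Td d → Td d → ℝ) (K k : Td d) : Set ℂ :=
  Complex.ofReal '' Set.Icc (Emin w₂ K k) (Emax w₂ K k)

/-- The interval `[m_K, M_K]`, viewed inside `ℂ`. -/
def bigBand (w₂ : Td d → Td d → Td d → ℝ) (K : Td d) : Set ℂ :=
  Complex.ofReal '' Set.Icc (mK w₂ K) (MK w₂ K)

/-- The two-particle branch
`Λ_K = {z : ∃ k, z ∉ [E_min(K,k), E_max(K,k)] ∧ Δ_K(k; z) = 0}`. -/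
def LamK (v₁ : Td d → ℝ) (w₁ : Td d → Td d → ℝ) (w₂ : Td d → Td d → Td d → ℝ)
    (K : Td d) : Set ℂ :=
  {z | ∃ k, z ∉ bandKk w₂ K k ∧ Delta v₁ w₁ w₂ K k z = 0}

/-- `Σ_K = [m_K, M_K] ∪ Λ_K`. -/
def SigK (v₁ : Td d → ℝ) (w₁ : Td d → Td d → ℝ) (w₂ : Td d → Td d → Td d → ℝ)
    (K : Td d) : Set ℂ :=
  bigBand w₂ K ∪ LamK v₁ w₁ w₂ K

/-- The defining equations of the generalized Friedrichs model `h(K, k)` acting on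
`ℂ ⊕ L²(T^d)`:
`(h f)₀ = w₁(K,k) f₀ + (1/√2) ∫ v₁(s) f₁(s) ds` and
`(h f)₁(q) = (1/√2) v₁(q) f₀ + w₂(K; k, q) f₁(q)` (the first off-diagonal entry is `h₀₁` and
the second is its adjoint `h₀₁*`). -/
def IsGenFriedrichs {d : ℕ} (v₁ : Td d → ℝ) (w₁ : Td d → Td d → ℝ)
    (w₂ : Td d → Td d → Td d → ℝ) (K k : Td d) (h : Hkk d →L[ℂ] Hkk d) : Prop :=
  ∀ f : Hkk d,
    (pk1 (h f) = (w₁ K k : ℂ) * pk1 f +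
        (Real.sqrt 2 : ℂ)⁻¹ * (∫ s, (v₁ s : ℂ) * (pk2 f) s)) ∧
    (⇑(pk2 (h f)) =ᵐ[volume] fun q =>
        (Real.sqrt 2 : ℂ)⁻¹ * (v₁ q : ℂ) * pk1 f + (w₂ K k q : ℂ) * (pk2 f) q)

/-!
Once the second component of `h f = z f` is solved for `f₁ = -v f₀ / (w - z)`, the eigenvector is
determined by the scalar `f₀`, so eigenspaces away from the values of `w` are lines, and the first
component says that `z` is a zero of `Δ(z) = a - z - ∫ |v|² / (w - z)`. By the resolvent identity,
`Δ(z₁) - Δ(z₂) = (z₂ - z₁) (1 + ∫ |v|² / ((w - z₁) (w - z₂)))`, and the last factor is at least `1`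
when, for almost every `q`, `z₁` and `z₂` lie on the same side of `w q`.
-/

section Eigenspace

open Module.End

theorem hasEigenvalue_iff_exists_apply_eq_smul {R M : Type*} [CommRing R] [AddCommGroup M]
    [Module R M] {T : Module.End R M} {z : R} :
    T.HasEigenvalue z ↔ ∃ f, f ≠ 0 ∧ T f = z • f := by
  simp only [hasEigenvalue_iff, Submodule.ne_bot_iff, mem_eigenspace_iff, and_comm]

theorem eigenspace_toLinearMap_eq_ker {R M : Type*} [CommRing R] [TopologicalSpace M]
    [AddCommGroup M] [IsTopologicalAddGroup M] [Module R M] [ContinuousConstSMul R M]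
    (T : M →L[R] M) (z : R) :
    eigenspace T.toLinearMap z = LinearMap.ker (T - z • (1 : M →L[R] M)).toLinearMap := by
  ext f
  exact mem_eigenspace_iff.trans sub_eq_zero.symm

end Eigenspace

section Friedrichs

open Module Module.End ComplexConjugate

variable {α 𝕜 : Type*} [RCLike 𝕜] [MeasurableSpace α] {μ : Measure α} {a : ℝ} {v : α → 𝕜}
  {w : α → ℝ} {h : End 𝕜 (WithLp 2 (𝕜 × Lp 𝕜 2 μ))}

/-- The (self-adjoint) Friedrichs model on `𝕜 ⊕ L²(μ)`: the scalar `a` and the operator of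
multiplication by `w`, coupled through `v`. It is a predicate on `h`, because for given `v` and `w`
the right-hand sides need not define elements of `L²(μ)`. The integral always converges, since
`snd_apply` forces `v` to be square integrable. A coupling constant such as `1/√2` is
part of `v`. -/
structure IsFriedrichsModel (a : ℝ) (v : α → 𝕜) (w : α → ℝ)
    (h : End 𝕜 (WithLp 2 (𝕜 × Lp 𝕜 2 μ))) : Prop where
  fst_apply (f : WithLp 2 (𝕜 × Lp 𝕜 2 μ)) :
    (h f).fst = a * f.fst + ∫ q, conj (v q) * f.snd q ∂μ
  snd_apply (f : WithLp 2 (𝕜 × Lp 𝕜 2 μ)) :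
    (h f).snd =ᵐ[μ] fun q => v q * f.fst + w q * f.snd q

variable (μ a v w) in
/-- The Fredholm determinant `Δ(z)` of the Friedrichs model; `Delta` is the case of the
coupling `v₁ / √2`. -/
def friedrichsDet (z : 𝕜) : 𝕜 :=
  a - z - ∫ q, (‖v q‖ : 𝕜) ^ 2 / (w q - z) ∂μ

theorem friedrichsDet_sub_friedrichsDet {z₁ z₂ : 𝕜}
    (hz₁ : ∀ᵐ q ∂μ, (w q : 𝕜) ≠ z₁) (hz₂ : ∀ᵐ q ∂μ, (w q : 𝕜) ≠ z₂)
    (hi₁ : Integrable (fun q => (‖v q‖ : 𝕜) ^ 2 / (w q - z₁)) μ)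
    (hi₂ : Integrable (fun q => (‖v q‖ : 𝕜) ^ 2 / (w q - z₂)) μ) :
    friedrichsDet μ a v w z₁ - friedrichsDet μ a v w z₂ =
      (z₂ - z₁) * (1 + ∫ q, (‖v q‖ : 𝕜) ^ 2 / ((w q - z₁) * (w q - z₂)) ∂μ) := by
  have resolvent_identity :
      (∫ q, (‖v q‖ : 𝕜) ^ 2 / (w q - z₂) ∂μ) - ∫ q, (‖v q‖ : 𝕜) ^ 2 / (w q - z₁) ∂μ =
        (z₂ - z₁) * ∫ q, (‖v q‖ : 𝕜) ^ 2 / ((w q - z₁) * (w q - z₂)) ∂μ := by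
    rw [← integral_sub hi₂ hi₁, ← integral_const_mul]
    refine integral_congr_ae ?_
    filter_upwards [hz₁, hz₂] with q hq₁ hq₂
    have := sub_ne_zero.2 hq₁
    have := sub_ne_zero.2 hq₂
    field_simp
    ring
  unfold friedrichsDet
  linear_combination resolvent_identity

namespace IsFriedrichsModel

theorem memLp_coupling (hh : IsFriedrichsModel a v w h) : MemLp v 2 μ := by
  let vacuum : WithLp 2 (𝕜 × Lp 𝕜 2 μ) := WithLp.toLp 2 (1, 0)
  refine (Lp.memLp (h vacuum).snd).ae_eq ?_
  filter_upwards [hh.snd_apply vacuum, AEEqFun.coeFn_zero (β := 𝕜)] with q hq h0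
  simpa [vacuum, h0] using hq

section Eigenvector

variable {z : 𝕜} {f : WithLp 2 (𝕜 × Lp 𝕜 2 μ)}

theorem snd_ae_eq (hh : IsFriedrichsModel a v w h) (hz : ∀ᵐ q ∂μ, (w q : 𝕜) ≠ z)
    (hf : h f = z • f) : f.snd =ᵐ[μ] fun q => -(v q * f.fst / (w q - z)) := by
  have hsnd := hh.snd_apply f
  rw [hf, WithLp.smul_snd] at hsnd
  filter_upwards [hz, hsnd, Lp.coeFn_smul z f.snd] with q hzq hq hsmul
  rw [hsmul, Pi.smul_apply, smul_eq_mul] at hq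
  have := sub_ne_zero.2 hzq
  field_simp
  linear_combination -hq

theorem eq_zero_of_fst_eq_zero (hh : IsFriedrichsModel a v w h) (hz : ∀ᵐ q ∂μ, (w q : 𝕜) ≠ z)
    (hf : h f = z • f) (hfst : f.fst = 0) : f = 0 := by
  have hsnd : f.snd = 0 := by
    rw [Lp.eq_zero_iff_ae_eq_zero]
    filter_upwards [hh.snd_ae_eq hz hf] with q hq
    simp [hq, hfst]
  exact WithLp.ofLp_injective 2 (Prod.ext hfst hsnd)

theorem fst_ne_zero (hh : IsFriedrichsModel a v w h) (hz : ∀ᵐ q ∂μ, (w q : 𝕜) ≠ z)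
    (hf : h.HasEigenvector z f) : f.fst ≠ 0 :=
  fun hfst => hf.2 (hh.eq_zero_of_fst_eq_zero hz hf.apply_eq_smul hfst)

theorem conj_mul_snd_ae_eq (hh : IsFriedrichsModel a v w h) (hz : ∀ᵐ q ∂μ, (w q : 𝕜) ≠ z)
    (hf : h f = z • f) :
    (fun q => conj (v q) * f.snd q) =ᵐ[μ] fun q => -f.fst * ((‖v q‖ : 𝕜) ^ 2 / (w q - z)) := by
  filter_upwards [hh.snd_ae_eq hz hf] with q hq
  rw [hq, ← RCLike.conj_mul]
  ring

end Eigenvector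

section Eigenvalue

variable {z : 𝕜}

theorem finrank_eigenspace_eq_one (hh : IsFriedrichsModel a v w h)
    (hz : ∀ᵐ q ∂μ, (w q : 𝕜) ≠ z) (hev : h.HasEigenvalue z) :
    finrank 𝕜 (h.eigenspace z) = 1 := by
  let fstOn : h.eigenspace z →ₗ[𝕜] 𝕜 := (WithLp.fstₗ 2 𝕜 𝕜 (Lp 𝕜 2 μ)).domRestrict _
  have fstOn_injective : Function.Injective fstOn :=
    (injective_iff_map_eq_zero _).2 fun f hf =>
      Subtype.ext (hh.eq_zero_of_fst_eq_zero hz (mem_eigenspace_iff.1 f.2) hf)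
  have : Module.Finite 𝕜 (h.eigenspace z) := .of_injective fstOn fstOn_injective
  have : Nontrivial (h.eigenspace z) := Submodule.nontrivial_iff_ne_bot.2 hev
  refine le_antisymm ?_ finrank_pos
  exact (LinearMap.finrank_le_finrank_of_injective fstOn_injective).trans_eq (finrank_self 𝕜)

theorem integrable_norm_sq_div (hh : IsFriedrichsModel a v w h)
    (hz : ∀ᵐ q ∂μ, (w q : 𝕜) ≠ z) (hev : h.HasEigenvalue z) :
    Integrable (fun q => (‖v q‖ : 𝕜) ^ 2 / (w q - z)) μ := by
  obtain ⟨f, hf⟩ := hev.exists_hasEigenvector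
  have hint : Integrable (fun q => conj (v q) * f.snd q) μ :=
    hh.memLp_coupling.star.integrable_mul (Lp.memLp f.snd)
  rw [integrable_congr (hh.conj_mul_snd_ae_eq hz hf.apply_eq_smul)] at hint
  exact (integrable_const_mul_iff (neg_ne_zero.2 (hh.fst_ne_zero hz hf)).isUnit _).1 hint

theorem friedrichsDet_eq_zero (hh : IsFriedrichsModel a v w h)
    (hz : ∀ᵐ q ∂μ, (w q : 𝕜) ≠ z) (hev : h.HasEigenvalue z) :
    friedrichsDet μ a v w z = 0 := by
  obtain ⟨f, hf⟩ := hev.exists_hasEigenvector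
  have hfst := hh.fst_apply f
  rw [hf.apply_eq_smul, WithLp.smul_fst, smul_eq_mul,
    integral_congr_ae (hh.conj_mul_snd_ae_eq hz hf.apply_eq_smul), integral_const_mul] at hfst
  refine (mul_eq_zero.1 ?_).resolve_left (hh.fst_ne_zero hz hf)
  unfold friedrichsDet
  linear_combination -hfst

end Eigenvalue

theorem eq_of_hasEigenvalue_of_mul_pos (hh : IsFriedrichsModel a v w h) {z₁ z₂ : ℝ}
    (hgap : ∀ᵐ q ∂μ, 0 < (w q - z₁) * (w q - z₂))
    (hev₁ : h.HasEigenvalue z₁) (hev₂ : h.HasEigenvalue z₂) : z₁ = z₂ := by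
  have hz₁ : ∀ᵐ q ∂μ, (w q : 𝕜) ≠ z₁ := hgap.mono fun q hq =>
    RCLike.ofReal_injective.ne (sub_ne_zero.1 (left_ne_zero_of_mul hq.ne'))
  have hz₂ : ∀ᵐ q ∂μ, (w q : 𝕜) ≠ z₂ := hgap.mono fun q hq =>
    RCLike.ofReal_injective.ne (sub_ne_zero.1 (right_ne_zero_of_mul hq.ne'))
  have hintegral : 0 ≤ ∫ q, ‖v q‖ ^ 2 / ((w q - z₁) * (w q - z₂)) ∂μ :=
    integral_nonneg_of_ae (hgap.mono fun q hq => div_nonneg (sq_nonneg _) hq.le)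
  have hdet := friedrichsDet_sub_friedrichsDet (a := a) hz₁ hz₂
    (hh.integrable_norm_sq_div hz₁ hev₁) (hh.integrable_norm_sq_div hz₂ hev₂)
  rw [hh.friedrichsDet_eq_zero hz₁ hev₁, hh.friedrichsDet_eq_zero hz₂ hev₂, sub_zero] at hdet
  have hprod : (z₂ - z₁) * (1 + ∫ q, ‖v q‖ ^ 2 / ((w q - z₁) * (w q - z₂)) ∂μ) = 0 := by
    apply RCLike.ofReal_injective (K := 𝕜)
    push_cast [← integral_ofReal]
    exact hdet.symm
  have hne : 1 + ∫ q, ‖v q‖ ^ 2 / ((w q - z₁) * (w q - z₂)) ∂μ ≠ 0 := by positivity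
  linarith [(mul_eq_zero.1 hprod).resolve_right hne]

end IsFriedrichsModel

theorem at_most_one_simple_eigenvalue_general (hh : IsFriedrichsModel a v w h) :
    (∀ z₁ z₂ : ℝ, (∀ᵐ q ∂μ, 0 < (w q - z₁) * (w q - z₂)) →
      h.HasEigenvalue z₁ → h.HasEigenvalue z₂ → z₁ = z₂) ∧
    (∀ z : 𝕜, (∀ᵐ q ∂μ, (w q : 𝕜) ≠ z) →
      h.HasEigenvalue z → finrank 𝕜 (h.eigenspace z) = 1) :=
  ⟨fun _ _ => hh.eq_of_hasEigenvalue_of_mul_pos, fun _ => hh.finrank_eigenspace_eq_one⟩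

end Friedrichs

theorem IsGenFriedrichs.isFriedrichsModel {v₁ : Td d → ℝ} {w₁ : Td d → Td d → ℝ}
    {w₂ : Td d → Td d → Td d → ℝ} {K k : Td d} {h : Hkk d →L[ℂ] Hkk d}
    (hh : IsGenFriedrichs v₁ w₁ w₂ K k h) :
    IsFriedrichsModel (w₁ K k) (fun q => (Real.sqrt 2 : ℂ)⁻¹ * v₁ q) (w₂ K k) h.toLinearMap where
  fst_apply f := by
    refine (hh f).1.trans ?_
    simp only [map_mul, map_inv₀, Complex.conj_ofReal, mul_assoc, integral_const_mul]
    rfl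
  snd_apply f := (hh f).2

theorem lt_of_lt_Emin {w₂ : Td d → Td d → Td d → ℝ} {K k : Td d} (hw : Continuous (w₂ K k))
    {z : ℝ} (hz : z < Emin w₂ K k) (q : Td d) : z < w₂ K k q :=
  hz.trans_le (ciInf_le (isCompact_range hw).bddBelow q)

theorem lt_of_Emax_lt {w₂ : Td d → Td d → Td d → ℝ} {K k : Td d} (hw : Continuous (w₂ K k))
    {z : ℝ} (hz : Emax w₂ K k < z) (q : Td d) : w₂ K k q < z :=
  (le_ciSup (isCompact_range hw).bddAbove q).trans_lt hz

/-- For fixed `K, k ∈ T^d`, the operator `h(K,k)` has at most one eigenvalue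
in `(-∞, E_min(K,k))` and at most one eigenvalue in `(E_max(K,k), +∞)`, and each such
eigenvalue is simple. -/
theorem at_most_one_simple_eigenvalue
    (d : ℕ) (hd : 1 ≤ d)
    (w₀ v₀ v₁ : Td d → ℝ) (w₁ : Td d → Td d → ℝ) (w₂ : Td d → Td d → Td d → ℝ)
    (hw₀ : Continuous w₀) (hv₀ : Continuous v₀) (hv₁ : Continuous v₁)
    (hw₁ : Continuous fun x : Td d × Td d => w₁ x.1 x.2)
    (hw₂ : Continuous fun x : Td d × Td d × Td d => w₂ x.1 x.2.1 x.2.2)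
    (hsym : ∀ K p q : Td d, w₂ K p q = w₂ K q p)
    (K k : Td d) (h : Hkk d →L[ℂ] Hkk d)
    (hh : IsGenFriedrichs v₁ w₁ w₂ K k h) :
    (∀ z₁ z₂ : ℝ, z₁ < Emin w₂ K k → z₂ < Emin w₂ K k →
      (∃ f : Hkk d, f ≠ 0 ∧ h f = (z₁ : ℂ) • f) →
      (∃ f : Hkk d, f ≠ 0 ∧ h f = (z₂ : ℂ) • f) → z₁ = z₂) ∧
    (∀ z₁ z₂ : ℝ, Emax w₂ K k < z₁ → Emax w₂ K k < z₂ →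
      (∃ f : Hkk d, f ≠ 0 ∧ h f = (z₁ : ℂ) • f) →
      (∃ f : Hkk d, f ≠ 0 ∧ h f = (z₂ : ℂ) • f) → z₁ = z₂) ∧
    (∀ z : ℝ, (z < Emin w₂ K k ∨ Emax w₂ K k < z) →
      (∃ f : Hkk d, f ≠ 0 ∧ h f = (z : ℂ) • f) →
      Module.finrank ℂ (LinearMap.ker (h - (z : ℂ) • (1 : Hkk d →L[ℂ] Hkk d)).toLinearMap) = 1) := by
  have hw : Continuous (w₂ K k) := hw₂.comp ((Continuous.prodMk_right K).comp (.prodMk_right k))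
  obtain ⟨unique, simple⟩ := at_most_one_simple_eigenvalue_general hh.isFriedrichsModel
  simp only [hasEigenvalue_iff_exists_apply_eq_smul] at unique simple
  refine ⟨fun z₁ z₂ hz₁ hz₂ => unique z₁ z₂ (.of_forall fun q => ?below),
    fun z₁ z₂ hz₁ hz₂ => unique z₁ z₂ (.of_forall fun q => ?above),
    fun z hz hf => eigenspace_toLinearMap_eq_ker h (z : ℂ) ▸
      simple z (.of_forall fun q => Complex.ofReal_injective.ne ?off) hf⟩
  case below =>
    exact mul_pos (sub_pos.2 (lt_of_lt_Emin hw hz₁ q)) (sub_pos.2 (lt_of_lt_Emin hw hz₂ q))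
  case above =>
    exact mul_pos_of_neg_of_neg (sub_neg.2 (lt_of_Emax_lt hw hz₁ q))
      (sub_neg.2 (lt_of_Emax_lt hw hz₂ q))
  case off =>
    exact hz.elim (fun hz => (lt_of_lt_Emin hw hz q).ne') fun hz => (lt_of_Emax_lt hw hz q).ne
end
end

section
/- For every K ∈ T^d, the channel operator H_ch(K) has purely essential spectrum and its spectrum equals Σ_K, that is, σ(H_ch(K)) = σ_ess(H_ch(K)) = Σ_K and σ_disc(H_ch(K)) = ∅. -/
open MeasureTheory Complex Filter Topology Set

noncomputable section

/-- The Hilbert space `L²(T^d) ⊕ L²((T^d)²)` on which the channel operator acts. -/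
abbrev HchSp (d : ℕ) := WithLp 2 (L2 d × L2two d)

def c1 {d : ℕ} (f : HchSp d) : L2 d := (WithLp.equiv 2 _ f).1

def c2 {d : ℕ} (f : HchSp d) : L2two d := (WithLp.equiv 2 _ f).2

/-- The essential spectrum of a bounded operator on a Hilbert space, via the Weyl criterion:
`λ ∈ σ_ess(A)` iff there is an orthonormal (singular) sequence `u` with `‖(A - λ)uₙ‖ → 0`. -/
def essSpec {H' : Type*} [NormedAddCommGroup H'] [InnerProductSpace ℂ H']
    (A : H' →L[ℂ] H') : Set ℂ :=
  {l | ∃ u : ℕ → H', Orthonormal ℂ u ∧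
        Tendsto (fun n => ‖A (u n) - l • u n‖) atTop (𝓝 0)}

variable {d : ℕ}

/-- The defining equations of the channel operator `H_ch(K)` acting on
`L²(T^d) ⊕ L²((T^d)²)`:
`(H_ch f)₁(p) = w₁(K; p) f₁(p) + (1/√2) ∫ v₁(t) f₂(p,t) dt`,
`(H_ch f)₂(p,q) = (1/√2) v₁(q) f₁(p) + w₂(K; p,q) f₂(p,q)`. -/
def IsChannel {d : ℕ} (v₁ : Td d → ℝ) (w₁ : Td d → Td d → ℝ)
    (w₂ : Td d → Td d → Td d → ℝ) (K : Td d) (Hc : HchSp d →L[ℂ] HchSp d) : Prop :=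
  ∀ f : HchSp d,
    (⇑(c1 (Hc f)) =ᵐ[volume] fun p =>
        (w₁ K p : ℂ) * (c1 f) p +
          (Real.sqrt 2 : ℂ)⁻¹ * (∫ t, (v₁ t : ℂ) * (c2 f) (p, t))) ∧
    (⇑(c2 (Hc f)) =ᵐ[volume] fun x : Td d × Td d =>
        (Real.sqrt 2 : ℂ)⁻¹ * (v₁ x.2 : ℂ) * (c1 f) x.1 +
          (w₂ K x.1 x.2 : ℂ) * (c2 f) x)

/-!
The channel operator `H` is a direct integral of Friedrichs models `h(p)` on `ℂ ⊕ L²(ν)`. If `χₙ` is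
an orthonormal sequence concentrating at `p` and `xₙ` are approximate eigenvectors of `h(p)`, then
`χₙ ⊗ xₙ` is, after normalization, a Weyl sequence for `H`, so every approximate eigenvalue of a
fibre is essential. Zeros of the Fredholm determinant are eigenvalues of a fibre; the values
`m (p, q)` are approximate eigenvalues of `h(p)`, because along an orthonormal sequence
concentrating at `q` the rank-one coupling tends to zero by Bessel's inequality. Conversely, if `z`
is not in the range of `m`, then eliminating the second component of `H - z` leaves multiplication
by the Fredholm determinant, which is invertible unless the determinant vanishes somewhere.
-/

section EssentialSpectrum

variable {E : Type*} [NormedAddCommGroup E] [InnerProductSpace ℂ E]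

theorem orthonormal_inv_norm_smul {𝕜 F ι : Type*} [RCLike 𝕜] [NormedAddCommGroup F]
    [InnerProductSpace 𝕜 F] {f : ι → F} (hne : ∀ i, f i ≠ 0)
    (horth : Pairwise fun i j => inner 𝕜 (f i) (f j) = 0) :
    Orthonormal 𝕜 fun i => (‖f i‖⁻¹ : 𝕜) • f i :=
  ⟨fun i => norm_smul_inv_norm (hne i), fun i j hij => by
    simp only [inner_smul_left, inner_smul_right, horth hij, mul_zero]⟩

theorem mem_essSpec_of_pairwise_orthogonal {A : E →L[ℂ] E} {z : ℂ} {f : ℕ → E}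
    (hne : ∀ n, f n ≠ 0) (horth : Pairwise fun m n => inner ℂ (f m) (f n) = 0)
    (hf : ∀ ε > 0, ∀ᶠ n in atTop, ‖A (f n) - z • f n‖ ≤ ε * ‖f n‖) : z ∈ essSpec A := by
  refine ⟨_, orthonormal_inv_norm_smul hne horth, ?_⟩
  rw [Metric.tendsto_nhds]
  intro ε hε
  filter_upwards [hf (ε / 2) (half_pos hε)] with n hn
  have hpos : 0 < ‖f n‖ := norm_pos_iff.2 (hne n)
  rw [map_smul, smul_comm z, ← smul_sub, dist_zero_right, norm_norm, norm_smul, norm_inv,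
    RCLike.norm_ofReal, abs_norm, inv_mul_lt_iff₀ hpos, mul_comm]
  exact hn.trans_lt (by gcongr; exact half_lt_self hε)

theorem essSpec_subset_spectrum (A : E →L[ℂ] E) : essSpec A ⊆ spectrum ℂ A := by
  rintro z ⟨u, hu, hlim⟩
  rw [spectrum.mem_iff]
  rintro ⟨U, hU⟩
  have hinv (x : E) : (↑U⁻¹ : E →L[ℂ] E) (z • x - A x) = x := by
    simpa [hU, Algebra.algebraMap_eq_smul_one] using DFunLike.congr_fun U.inv_mul x
  have hbound (n : ℕ) : 1 ≤ ‖(↑U⁻¹ : E →L[ℂ] E)‖ * ‖A (u n) - z • u n‖ := by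
    rw [← hu.1 n, norm_sub_rev]
    exact (congrArg norm (hinv (u n))).ge.trans (ContinuousLinearMap.le_opNorm _ _)
  have hlim' := hlim.const_mul ‖(↑U⁻¹ : E →L[ℂ] E)‖
  rw [mul_zero] at hlim'
  exact absurd (ge_of_tendsto' hlim' hbound) (by norm_num)

end EssentialSpectrum

theorem bijective_of_schurComplement {E₁ E₂ F₁ F₂ : Type*} [AddGroup E₁] [AddGroup E₂]
    [AddGroup F₁] [AddGroup F₂] (T : E₁ × E₂ →+ F₁ × F₂) {S : E₁ → F₁} (hS : S.Bijective)
    (hD : Function.Bijective fun y => (T (0, y)).2)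
    (hTS : ∀ x y, (T (x, y)).2 = 0 → (T (x, y)).1 = S x) : Function.Bijective T := by
  have hT0 : T (0, 0) = 0 := map_zero T
  have hS0 : S 0 = 0 := by rw [← hTS 0 0 (by rw [hT0]; rfl), hT0]; rfl
  constructor
  · rw [injective_iff_map_eq_zero]
    rintro ⟨x, y⟩ hxy
    have hx : x = 0 := hS.1 <| by rw [hS0, ← hTS x y (by rw [hxy]; rfl), hxy]; rfl
    subst hx
    have hy : y = 0 := hD.1 <| by simp only [hxy, hT0]
    rw [hy]; rfl
  · rintro ⟨g₁, g₂⟩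
    obtain ⟨y, hy : (T (0, y)).2 = g₂⟩ := hD.2 g₂
    obtain ⟨x, hx⟩ := hS.2 (g₁ - (T (0, y)).1)
    obtain ⟨y', hy' : (T (0, y')).2 = -(T (x, 0)).2⟩ := hD.2 _
    have hsplit : T (x, y') = T (x, 0) + T (0, y') := by rw [← map_add]; simp
    have hzero : (T (x, y')).2 = 0 := by rw [hsplit, Prod.snd_add, hy', add_neg_cancel]
    refine ⟨(x, y') + (0, y), ?_⟩
    rw [map_add]
    refine Prod.ext ?_ ?_
    · rw [Prod.fst_add, hTS x y' hzero, hx, sub_add_cancel]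
    · rw [Prod.snd_add, hzero, hy, zero_add]

section Multiplication

variable {X 𝕜 : Type*} [TopologicalSpace X] [CompactSpace X] [MeasurableSpace X] [BorelSpace X]
  [RCLike 𝕜] {μ : Measure X} [IsFiniteMeasure μ] {p : ENNReal}

/-- Multiplication of an `L^p` function by a continuous function on a compact space. -/
def mulLp (g : C(X, 𝕜)) (f : Lp 𝕜 p μ) : Lp 𝕜 p μ :=
  ContinuousMap.toLp ⊤ μ 𝕜 g • f

theorem coeFn_mulLp (g : C(X, 𝕜)) (f : Lp 𝕜 p μ) : mulLp g f =ᵐ[μ] fun x => g x * f x := by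
  filter_upwards [Lp.coeFn_lpSMul (r := p) (ContinuousMap.toLp ⊤ μ 𝕜 g) f,
    ContinuousMap.coeFn_toLp (p := ⊤) (𝕜 := 𝕜) μ g] with x hmul hg
  rw [mulLp, hmul, Pi.smul_apply', hg, smul_eq_mul]

theorem eq_mulLp_iff {g : C(X, 𝕜)} {f h : Lp 𝕜 p μ} :
    h = mulLp g f ↔ h =ᵐ[μ] fun x => g x * f x :=
  ⟨fun hh => hh ▸ coeFn_mulLp g f, fun hh => Lp.ext (hh.trans (coeFn_mulLp g f).symm)⟩

theorem mulLp_sub (g h : C(X, 𝕜)) (f : Lp 𝕜 p μ) : mulLp (g - h) f = mulLp g f - mulLp h f := by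
  refine (eq_mulLp_iff.2 ?_).symm
  filter_upwards [Lp.coeFn_sub (mulLp g f) (mulLp h f), coeFn_mulLp g f, coeFn_mulLp h f]
    with x hsub hg hh
  rw [hsub, Pi.sub_apply, hg, hh, ContinuousMap.sub_apply, sub_mul]

theorem mulLp_const (c : 𝕜) (f : Lp 𝕜 p μ) : mulLp (.const X c) f = c • f :=
  (eq_mulLp_iff.2 (Lp.coeFn_smul c f)).symm

theorem mulLp_mulLp_of_mul_eq_one {g h : C(X, 𝕜)} (hgh : g * h = 1) (f : Lp 𝕜 p μ) :
    mulLp g (mulLp h f) = f := by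
  refine (eq_mulLp_iff.2 ?_).symm
  filter_upwards [coeFn_mulLp h f] with x hx
  rw [hx, ← mul_assoc, ← ContinuousMap.mul_apply, hgh, ContinuousMap.one_apply, one_mul]

theorem mulLp_bijective {g : C(X, 𝕜)} (hg : ∀ x, g x ≠ 0) :
    Function.Bijective (mulLp g : Lp 𝕜 p μ → Lp 𝕜 p μ) := by
  let h : C(X, 𝕜) := ⟨fun x => (g x)⁻¹, g.continuous.inv₀ hg⟩
  have hgh : g * h = 1 := by ext x; exact mul_inv_cancel₀ (hg x)
  exact Function.bijective_iff_has_inverse.2 ⟨mulLp h,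
    mulLp_mulLp_of_mul_eq_one (mul_comm g h ▸ hgh), mulLp_mulLp_of_mul_eq_one hgh⟩

theorem norm_mulLp_le {g : C(X, 𝕜)} {f : Lp 𝕜 p μ} {C : ℝ}
    (hC : ∀ᵐ x ∂μ, f x ≠ 0 → ‖g x‖ ≤ C) : ‖mulLp g f‖ ≤ C * ‖f‖ := by
  apply Lp.norm_le_mul_norm_of_ae_le_mul
  filter_upwards [coeFn_mulLp g f, hC] with x hx hgx
  rw [hx, norm_mul]
  rcases eq_or_ne (f x) 0 with h0 | h0
  · simp [h0]
  · gcongr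
    exact hgx h0

end Multiplication

section Concentration

/-- The members of the sequence `χ` are eventually supported in every neighbourhood of `p`. -/
def ConcentratesAt {X : Type*} [TopologicalSpace X] [MeasurableSpace X] {μ : Measure X}
    (χ : ℕ → Lp ℂ 2 μ) (p : X) : Prop :=
  ∀ N ∈ 𝓝 p, ∀ᶠ n in atTop, ∀ᵐ x ∂μ, x ∉ N → χ n x = 0

theorem exists_pairwise_disjoint_isOpen_tendsto_smallSets {X : Type*} [MetricSpace X] (p : X)
    [(𝓝[≠] p).NeBot] : ∃ U : ℕ → Set X, (∀ n, IsOpen (U n)) ∧ (∀ n, (U n).Nonempty) ∧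
      Pairwise (Function.onFun Disjoint U) ∧ Tendsto U atTop (𝓝 p).smallSets := by
  have hglb : IsGLB ((dist · p) '' {p}ᶜ) 0 := by
    refine ⟨by rintro _ ⟨y, -, rfl⟩; exact dist_nonneg, fun b hb => ?_⟩
    have hlim : Tendsto (dist · p) (𝓝[≠] p) (𝓝 0) :=
      (tendsto_iff_dist_tendsto_zero.1 tendsto_id).mono_left nhdsWithin_le_nhds
    exact ge_of_tendsto hlim (eventually_nhdsWithin_of_forall fun y hy => hb ⟨y, hy, rfl⟩)
  have hne : ((dist · p) '' ({p}ᶜ : Set X)).Nonempty :=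
    (NeBot.nonempty_of_mem ‹_› (self_mem_nhdsWithin (a := p))).image _
  obtain ⟨r, hr, -, hr0, hrmem⟩ := hglb.exists_seq_strictAnti_tendsto_of_notMem
    (by rintro ⟨y, hy, h0⟩; exact hy (dist_eq_zero.1 h0)) hne
  refine ⟨fun n => {y | r (2 * n + 2) < dist y p ∧ dist y p < r (2 * n)}, fun n => ?_,
    fun n => ?_, ?_, ?_⟩
  · have hdist : Continuous fun y => dist y p := by fun_prop
    exact (isOpen_lt continuous_const hdist).inter (isOpen_lt hdist continuous_const)
  · obtain ⟨y, -, hy⟩ := hrmem (2 * n + 1)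
    exact ⟨y, (hr (by omega)).trans_eq hy.symm, hy.trans_lt (hr (by omega))⟩
  · refine (pairwise_disjoint_on _).2 fun m n hmn => Set.disjoint_left.2 ?_
    rintro y ⟨hlow, -⟩ ⟨-, hup⟩
    exact (hlow.trans hup).not_ge (hr.antitone (by omega))
  · refine tendsto_smallSets_iff.2 fun N hN => ?_
    obtain ⟨ε, hε, hball⟩ := Metric.mem_nhds_iff.1 hN
    filter_upwards [(hr0.comp (tendsto_id.const_mul_atTop' two_pos)).eventually_lt_const hε]
      with n hn y hy
    exact hball (hy.2.trans hn)

theorem inner_indicatorConstLp_eq_zero_of_disjoint {X 𝕜 : Type*} [RCLike 𝕜] [MeasurableSpace X]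
    {μ : Measure X} {s t : Set X} (hs : MeasurableSet s) (ht : MeasurableSet t) (hμs : μ s ≠ ⊤)
    (hμt : μ t ≠ ⊤) (hst : Disjoint s t) (a b : 𝕜) :
    inner 𝕜 (indicatorConstLp 2 hs hμs a) (indicatorConstLp 2 ht hμt b) = 0 := by
  simp [MeasureTheory.L2.inner_indicatorConstLp_indicatorConstLp, hst.inter_eq]

theorem exists_orthonormal_concentratesAt {X : Type*} [MetricSpace X] [MeasurableSpace X]
    [OpensMeasurableSpace X] (μ : Measure X) [IsFiniteMeasure μ] [μ.IsOpenPosMeasure] (p : X)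
    [(𝓝[≠] p).NeBot] : ∃ χ : ℕ → Lp ℂ 2 μ, Orthonormal ℂ χ ∧ ConcentratesAt χ p := by
  obtain ⟨U, hUo, hUne, hUd, hUp⟩ := exists_pairwise_disjoint_isOpen_tendsto_smallSets p
  let e (n : ℕ) : Lp ℂ 2 μ := indicatorConstLp 2 (hUo n).measurableSet (measure_ne_top μ _) 1
  have he0 (n : ℕ) : e n ≠ 0 := by
    have hpos : 0 < μ.real (U n) :=
      ENNReal.toReal_pos ((hUo n).measure_pos μ (hUne n)).ne' (measure_ne_top μ _)
    rw [← norm_ne_zero_iff, norm_indicatorConstLp two_ne_zero ENNReal.ofNat_ne_top, norm_one,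
      one_mul]
    exact (Real.rpow_pos_of_pos hpos _).ne'
  refine ⟨_, orthonormal_inv_norm_smul he0 fun m n hmn =>
    inner_indicatorConstLp_eq_zero_of_disjoint _ _ _ _ (hUd hmn) 1 1, fun N hN => ?_⟩
  filter_upwards [tendsto_smallSets_iff.1 hUp N hN] with n hn
  filter_upwards [Lp.coeFn_smul (RCLike.ofReal ‖e n‖ : ℂ)⁻¹ (e n), indicatorConstLp_coeFn (p := 2)
    (hs := (hUo n).measurableSet) (hμs := measure_ne_top μ _) (c := (1 : ℂ))] with x hsmul hx hxN
  rw [hsmul, Pi.smul_apply, hx, Set.indicator_of_notMem fun h => hxN (hn h), smul_zero]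

theorem ConcentratesAt.eventually_norm_mulLp_le {X : Type*} [TopologicalSpace X] [CompactSpace X]
    [MeasurableSpace X] [BorelSpace X] {μ : Measure X} [IsFiniteMeasure μ] {χ : ℕ → Lp ℂ 2 μ}
    {p : X} (hχ : ConcentratesAt χ p) {g : C(X, ℂ)} (hg : g p = 0) {ε : ℝ} (hε : 0 < ε) :
    ∀ᶠ n in atTop, ∀ c : ℂ, ‖mulLp g (c • χ n)‖ ≤ ε * ‖c • χ n‖ := by
  have hN : ∀ᶠ x in 𝓝 p, ‖g x‖ < ε :=
    g.continuous.norm.continuousAt.eventually_lt_const (by simpa [hg] using hε)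
  filter_upwards [hχ _ hN] with n hn c
  refine norm_mulLp_le ?_
  filter_upwards [hn, Lp.coeFn_smul c (χ n)] with x hx hsmul h0
  contrapose! h0
  rw [hsmul, Pi.smul_apply, hx fun h => h0.not_gt h, smul_zero]

end Concentration

theorem norm_toLp_le_add {E F : Type*} [SeminormedAddCommGroup E] [SeminormedAddCommGroup F]
    {p : ENNReal} [Fact (1 ≤ p)] (x : E) (y : F) : ‖WithLp.toLp p (x, y)‖ ≤ ‖x‖ + ‖y‖ :=
  calc ‖WithLp.toLp p (x, y)‖ = ‖WithLp.toLp p (x, (0 : F)) + WithLp.toLp p ((0 : E), y)‖ := by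
        rw [← WithLp.toLp_add, Prod.mk_add_mk, add_zero, zero_add]
    _ ≤ ‖WithLp.toLp p (x, (0 : F))‖ + ‖WithLp.toLp p ((0 : E), y)‖ := norm_add_le _ _
    _ = ‖x‖ + ‖y‖ := by rw [WithLp.norm_toLp_fst, WithLp.norm_toLp_snd]

section TensorProduct

variable {X Y : Type*} [MeasurableSpace X] [MeasurableSpace Y] {μ : Measure X} {ν : Measure Y}

theorem memLp_two_mul_prod {𝕜 : Type*} [RCLike 𝕜] {f : X → 𝕜} {g : Y → 𝕜} (hf : MemLp f 2 μ)
    (hg : MemLp g 2 ν) : MemLp (fun x : X × Y => f x.1 * g x.2) 2 (μ.prod ν) := by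
  refine (memLp_two_iff_integrable_sq_norm (hf.1.comp_fst.mul hg.1.comp_snd)).2 ?_
  simpa only [Pi.mul_apply, norm_mul, mul_pow] using
    ((memLp_two_iff_integrable_sq_norm hf.1).1 hf).mul_prod
      ((memLp_two_iff_integrable_sq_norm hg.1).1 hg)

/-- The elementary tensor `(f ⊗ g)(x, y) = f x * g y` in `L²(μ × ν)`, linear in `g`. -/
def tensorL2 (f : Lp ℂ 2 μ) : Lp ℂ 2 ν →ₗ[ℂ] Lp ℂ 2 (μ.prod ν) where
  toFun g := (memLp_two_mul_prod (Lp.memLp f) (Lp.memLp g)).toLp _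
  map_add' g h := by
    rw [← MemLp.toLp_add]
    refine MemLp.toLp_congr _ _ ?_
    filter_upwards [Measure.quasiMeasurePreserving_snd.ae (Lp.coeFn_add g h)] with x hx
    simp only [hx, Pi.add_apply, mul_add]
  map_smul' c g := by
    rw [RingHom.id_apply, ← MemLp.toLp_const_smul]
    refine MemLp.toLp_congr _ _ ?_
    filter_upwards [Measure.quasiMeasurePreserving_snd.ae (Lp.coeFn_smul c g)] with x hx
    simp only [hx, Pi.smul_apply, smul_eq_mul, mul_left_comm]

theorem coeFn_tensorL2 (f : Lp ℂ 2 μ) (g : Lp ℂ 2 ν) :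
    tensorL2 f g =ᵐ[μ.prod ν] fun x => f x.1 * g x.2 :=
  MemLp.coeFn_toLp (memLp_two_mul_prod (Lp.memLp f) (Lp.memLp g))

/-- `χ ⊗ (c, g) = (c χ, χ ⊗ g)`: the vector of `L²(μ) ⊕ L²(μ × ν)` with profile `χ` in the first
variable and constant fibre `(c, g)`. -/
def tensorFiber (χ : Lp ℂ 2 μ) :
    WithLp 2 (ℂ × Lp ℂ 2 ν) →ₗ[ℂ] WithLp 2 (Lp ℂ 2 μ × Lp ℂ 2 (μ.prod ν)) where
  toFun x := WithLp.toLp 2 (x.fst • χ, tensorL2 χ x.snd)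
  map_add' x y := by
    rw [WithLp.add_fst, WithLp.add_snd, add_smul, map_add]
    rfl
  map_smul' c x := by
    rw [WithLp.smul_fst, WithLp.smul_snd, smul_eq_mul, mul_smul, map_smul]
    rfl

theorem tensorFiber_apply (χ : Lp ℂ 2 μ) (x : WithLp 2 (ℂ × Lp ℂ 2 ν)) :
    tensorFiber χ x = WithLp.toLp 2 (x.fst • χ, tensorL2 χ x.snd) :=
  rfl

variable [SFinite μ] [SFinite ν]

theorem inner_tensorL2 (f f' : Lp ℂ 2 μ) (g g' : Lp ℂ 2 ν) :
    inner ℂ (tensorL2 f g) (tensorL2 f' g') = inner ℂ f f' * inner ℂ g g' := by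
  rw [L2.inner_def, L2.inner_def, L2.inner_def, ← integral_prod_mul]
  refine integral_congr_ae ?_
  filter_upwards [coeFn_tensorL2 f g, coeFn_tensorL2 f' g'] with x hx hx'
  simp only [hx, hx', RCLike.inner_apply', map_mul]
  ring

theorem inner_tensorFiber (χ χ' : Lp ℂ 2 μ) (x y : WithLp 2 (ℂ × Lp ℂ 2 ν)) :
    inner ℂ (tensorFiber χ x) (tensorFiber χ' y) = inner ℂ χ χ' * inner ℂ x y := by
  have hxy : inner ℂ x y = starRingEnd ℂ x.fst * y.fst + inner ℂ x.snd y.snd := by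
    rw [WithLp.prod_inner_apply, RCLike.inner_apply']; rfl
  rw [hxy, WithLp.prod_inner_apply, tensorFiber_apply, tensorFiber_apply, inner_tensorL2,
    inner_smul_left, inner_smul_right]
  ring

theorem norm_tensorFiber {χ : Lp ℂ 2 μ} (hχ : ‖χ‖ = 1)
    (x : WithLp 2 (ℂ × Lp ℂ 2 ν)) : ‖tensorFiber χ x‖ = ‖x‖ := by
  rw [← sq_eq_sq₀ (norm_nonneg _) (norm_nonneg _), ← inner_self_eq_norm_sq (𝕜 := ℂ),
    ← inner_self_eq_norm_sq (𝕜 := ℂ), inner_tensorFiber, inner_self_eq_norm_sq_to_K χ, hχ]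
  simp

end TensorProduct

theorem tensorL2_mulLp {X Y : Type*} [TopologicalSpace X] [TopologicalSpace Y] [CompactSpace X]
    [CompactSpace Y] [MeasurableSpace X] [MeasurableSpace Y] [BorelSpace Y] [BorelSpace (X × Y)]
    {μ : Measure X} {ν : Measure Y} [IsFiniteMeasure μ] [IsFiniteMeasure ν] (f : Lp ℂ 2 μ)
    (g : C(Y, ℂ)) (h : Lp ℂ 2 ν) :
    tensorL2 f (mulLp g h) = mulLp (g.comp .snd) (tensorL2 f h) := by
  refine eq_mulLp_iff.2 ?_
  filter_upwards [coeFn_tensorL2 f (mulLp g h), coeFn_tensorL2 f h,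
    Measure.quasiMeasurePreserving_snd.ae (coeFn_mulLp g h)] with x hleft hright hmul
  rw [hleft, hright, hmul, mul_left_comm]
  rfl

theorem ConcentratesAt.eventually_norm_mulLp_tensorL2_le {X Y : Type*}
    [TopologicalSpace X] [TopologicalSpace Y] [CompactSpace X] [CompactSpace Y]
    [MeasurableSpace X] [MeasurableSpace Y] [BorelSpace (X × Y)] {μ : Measure X} {ν : Measure Y}
    [IsFiniteMeasure μ] [IsFiniteMeasure ν] {χ : ℕ → Lp ℂ 2 μ} {p : X} (hχ : ConcentratesAt χ p)
    {g : C(X × Y, ℂ)} (hg : ∀ y, g (p, y) = 0) {ε : ℝ} (hε : 0 < ε) :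
    ∀ᶠ n in atTop, ∀ f : Lp ℂ 2 ν,
      ‖mulLp g (tensorL2 (χ n) f)‖ ≤ ε * ‖tensorL2 (χ n) f‖ := by
  -- The tube lemma makes the smallness near `{p} × Y` uniform in the second variable.
  have hN : ∀ᶠ x in 𝓝 p, ∀ y, ‖g (x, y)‖ < ε := by
    have htube := isCompact_univ.eventually_forall_of_forall_eventually (x₀ := p) (K := univ)
      (P := fun x y => ‖g (x, y)‖ < ε) fun y _ =>
        g.continuous.norm.continuousAt.eventually_lt_const (by simpa [hg] using hε)
    simpa only [mem_univ, forall_const] using htube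
  filter_upwards [hχ _ hN] with n hn f
  refine norm_mulLp_le ?_
  filter_upwards [Measure.quasiMeasurePreserving_fst.ae hn, coeFn_tensorL2 (χ n) f]
    with x hx htensor h0
  contrapose! h0
  rw [htensor, hx fun h => h0.not_gt (h x.2), zero_mul]

section FriedrichsModel

/-- The Fredholm determinant of the Friedrichs model, for `z` outside the range of `m`. -/
def friedrichsDelta {Y : Type*} [TopologicalSpace Y] [MeasurableSpace Y]
    {ν : Measure Y} (v : Lp ℂ 2 ν) (c : ℂ) (m : C(Y, ℂ)) (z : ℂ) : ℂ :=
  c - z - ∫ t, (‖v t‖ : ℂ) ^ 2 / (m t - z) ∂ν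

variable {Y : Type*} [TopologicalSpace Y] [CompactSpace Y] [MeasurableSpace Y] [BorelSpace Y]
  {ν : Measure Y} [IsFiniteMeasure ν]

/-- The Friedrichs model on `ℂ ⊕ L²(ν)`: a rank-one coupling, through the form factor `v`, of a
number `c` and the operator of multiplication by `m`. -/
def friedrichs (v : Lp ℂ 2 ν) (c : ℂ) (m : C(Y, ℂ)) (x : WithLp 2 (ℂ × Lp ℂ 2 ν)) :
    WithLp 2 (ℂ × Lp ℂ 2 ν) :=
  WithLp.toLp 2 (c * x.fst + inner ℂ v x.snd, x.fst • v + mulLp m x.snd)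

theorem exists_friedrichs_eq_smul {v : Lp ℂ 2 ν} {c z : ℂ} {m : C(Y, ℂ)} (hz : ∀ y, m y ≠ z)
    (hΔ : friedrichsDelta v c m z = 0) : ∃ x ≠ 0, friedrichs v c m x = z • x := by
  let r : C(Y, ℂ) := ⟨fun y => (m y - z)⁻¹,
    (m.continuous.sub continuous_const).inv₀ fun y => sub_ne_zero.2 (hz y)⟩
  have hinner : inner ℂ v (mulLp r v) = ∫ t, (‖v t‖ : ℂ) ^ 2 / (m t - z) ∂ν := by
    rw [L2.inner_def]
    refine integral_congr_ae ?_
    filter_upwards [coeFn_mulLp r v] with t ht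
    rw [ht, RCLike.inner_apply', mul_left_comm, Complex.conj_mul', mul_comm, div_eq_mul_inv]
    rfl
  have hmul : mulLp (m - .const Y z) (mulLp r v) = v :=
    mulLp_mulLp_of_mul_eq_one (by ext y; exact mul_inv_cancel₀ (sub_ne_zero.2 (hz y))) v
  rw [mulLp_sub, mulLp_const, sub_eq_iff_eq_add] at hmul
  refine ⟨WithLp.toLp 2 (-1, mulLp r v),
    fun h => neg_ne_zero.2 one_ne_zero (congrArg WithLp.fst h), ?_⟩
  rw [friedrichsDelta, ← hinner] at hΔ
  refine congrArg (WithLp.toLp 2) (Prod.ext ?_ ?_)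
  · change c * -1 + inner ℂ v (mulLp r v) = z * -1
    linear_combination -hΔ
  · change (-1 : ℂ) • v + mulLp m (mulLp r v) = z • mulLp r v
    rw [hmul, neg_one_smul, neg_add_cancel_left]

end FriedrichsModel

theorem exists_norm_friedrichs_sub_smul_le {Y : Type*} [MetricSpace Y] [CompactSpace Y]
    [MeasurableSpace Y] [BorelSpace Y] {ν : Measure Y} [IsFiniteMeasure ν] [ν.IsOpenPosMeasure]
    (v : Lp ℂ 2 ν) (c : ℂ) (m : C(Y, ℂ)) (q : Y) [(𝓝[≠] q).NeBot] {ε : ℝ} (hε : 0 < ε) :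
    ∃ x ≠ 0, ‖friedrichs v c m x - m q • x‖ ≤ ε * ‖x‖ := by
  obtain ⟨φ, hφ, hφq⟩ := exists_orthonormal_concentratesAt ν q
  have hinner : ∀ᶠ n in atTop, ‖(inner ℂ v (φ n) : ℂ)‖ ≤ ε / 2 := by
    have hBessel : Tendsto (fun n => ‖(inner ℂ (φ n) v : ℂ)‖ ^ 2) atTop (𝓝 0) :=
      (hφ.inner_products_summable v).tendsto_atTop_zero
    filter_upwards [hBessel.eventually_le_const (pow_pos (half_pos hε) 2)] with n hn
    rw [norm_inner_symm]
    exact le_of_sq_le_sq hn (half_pos hε).le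
  have hmul := hφq.eventually_norm_mulLp_le (g := m - .const Y (m q)) (sub_self _) (half_pos hε)
  obtain ⟨n, hn, hn'⟩ := (hinner.and hmul).exists
  have hnorm : ‖WithLp.toLp 2 ((0 : ℂ), φ n)‖ = 1 := (WithLp.norm_toLp_snd 2 _ _ _).trans (hφ.1 n)
  refine ⟨WithLp.toLp 2 (0, φ n), norm_ne_zero_iff.1 (hnorm ▸ one_ne_zero), ?_⟩
  have heq : friedrichs v c m (WithLp.toLp 2 (0, φ n)) - m q • WithLp.toLp 2 (0, φ n) =
      WithLp.toLp 2 (inner ℂ v (φ n), mulLp (m - .const Y (m q)) (φ n)) := by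
    rw [mulLp_sub, mulLp_const]
    refine congrArg (WithLp.toLp 2) (Prod.ext ?_ ?_)
    · change c * 0 + inner ℂ v (φ n) - m q * 0 = inner ℂ v (φ n)
      ring
    · change (0 : ℂ) • v + mulLp m (φ n) - m q • φ n = mulLp m (φ n) - m q • φ n
      rw [zero_smul, zero_add]
  have hmul_le := hn' 1
  rw [one_smul, hφ.1, mul_one] at hmul_le
  rw [heq, hnorm, mul_one]
  exact (norm_toLp_le_add _ _).trans (by linarith)

theorem continuous_integral_mul {X Y 𝕜 : Type*} [RCLike 𝕜] [TopologicalSpace X]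
    [FirstCountableTopology X] [TopologicalSpace Y] [CompactSpace X] [CompactSpace Y]
    [MeasurableSpace Y] [OpensMeasurableSpace Y] {ν : Measure Y} {h : Y → 𝕜}
    (hh : Integrable h ν) (g : C(X × Y, 𝕜)) : Continuous fun x => ∫ t, h t * g (x, t) ∂ν := by
  refine continuous_of_dominated (bound := fun t => ‖h t‖ * ‖g‖) (fun x => ?_) (fun x => ?_)
    (hh.norm.mul_const _) ?_
  · exact hh.1.mul (g.curry x).continuous.aestronglyMeasurable
  · filter_upwards with t
    rw [norm_mul]
    gcongr
    exact g.norm_coe_le_norm (x, t)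
  · filter_upwards with t
    fun_prop

/-- `H` is the `2 × 2` operator matrix on `L²(μ) ⊕ L²(μ × ν)` with multiplication by `a` and `m` on
the diagonal and `f ↦ (p ↦ ⟪v, f (p, ·)⟫)` and its adjoint off the diagonal; the constant `1/√2`
of the channel operator is absorbed in `v`. -/
def IsChannelOperator {X Y : Type*} [TopologicalSpace X] [TopologicalSpace Y] [MeasurableSpace X]
    [MeasurableSpace Y] {μ : Measure X} {ν : Measure Y} (v : Lp ℂ 2 ν) (a : C(X, ℂ))
    (m : C(X × Y, ℂ)) (H : WithLp 2 (Lp ℂ 2 μ × Lp ℂ 2 (μ.prod ν)) →L[ℂ]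
      WithLp 2 (Lp ℂ 2 μ × Lp ℂ 2 (μ.prod ν))) : Prop :=
  ∀ f, ((H f).fst =ᵐ[μ] fun p =>
      a p * f.fst p + ∫ t, starRingEnd ℂ (v t) * f.snd (p, t) ∂ν) ∧
    ((H f).snd =ᵐ[μ.prod ν] fun x => v x.2 * f.fst x.1 + m x * f.snd x)

/-- The spectrum of the channel operator: the range of `m`, together with the points outside the
fibre ranges at which the Fredholm determinant of a fibre vanishes. -/
def channelSpectrum {X Y : Type*} [TopologicalSpace X] [TopologicalSpace Y] [MeasurableSpace Y]
    {ν : Measure Y} (v : Lp ℂ 2 ν) (a : C(X, ℂ)) (m : C(X × Y, ℂ)) : Set ℂ :=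
  range m ∪ {z | ∃ k, (∀ q, m (k, q) ≠ z) ∧ friedrichsDelta v (a k) (m.curry k) z = 0}

theorem continuous_friedrichsDelta {X Y : Type*} [TopologicalSpace X] [FirstCountableTopology X]
    [TopologicalSpace Y] [CompactSpace X] [CompactSpace Y] [MeasurableSpace Y]
    [OpensMeasurableSpace Y] {ν : Measure Y} (v : Lp ℂ 2 ν) (a : C(X, ℂ)) {m : C(X × Y, ℂ)}
    {z : ℂ} (hz : ∀ x, m x ≠ z) :
    Continuous fun k => friedrichsDelta v (a k) (m.curry k) z := by
  let r : C(X × Y, ℂ) := ⟨fun x => (m x - z)⁻¹,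
    (m.continuous.sub continuous_const).inv₀ fun x => sub_ne_zero.2 (hz x)⟩
  have hv : Integrable (fun t => (‖v t‖ : ℂ) ^ 2) ν := by
    exact_mod_cast ((memLp_two_iff_integrable_sq_norm (Lp.aestronglyMeasurable v)).1
      (Lp.memLp v)).ofReal (𝕜 := ℂ)
  exact (a.continuous.sub continuous_const).sub (continuous_integral_mul hv r)

theorem IsChannelOperator.snd_ae_eq_of_snd_eq_smul {X Y : Type*} [TopologicalSpace X]
    [TopologicalSpace Y] [MeasurableSpace X] [MeasurableSpace Y] {μ : Measure X} {ν : Measure Y}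
    {v : Lp ℂ 2 ν} {a : C(X, ℂ)} {m : C(X × Y, ℂ)}
    {H : WithLp 2 (Lp ℂ 2 μ × Lp ℂ 2 (μ.prod ν)) →L[ℂ]
      WithLp 2 (Lp ℂ 2 μ × Lp ℂ 2 (μ.prod ν))} (hH : IsChannelOperator v a m H) {z : ℂ}
    (hz : ∀ x, m x ≠ z)
    {f : WithLp 2 (Lp ℂ 2 μ × Lp ℂ 2 (μ.prod ν))} (hf : (H f).snd = z • f.snd) :
    f.snd =ᵐ[μ.prod ν] fun x => -(v x.2 * f.fst x.1 / (m x - z)) := by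
  filter_upwards [(hH f).2, Lp.coeFn_smul z f.snd] with x hx hsmul
  rw [hf, hsmul, Pi.smul_apply, smul_eq_mul] at hx
  have hne := sub_ne_zero.2 (hz x)
  field_simp
  linear_combination -hx

section Channel

variable {X Y : Type*} [MetricSpace X] [MetricSpace Y] [CompactSpace X] [CompactSpace Y]
  [MeasurableSpace X] [MeasurableSpace Y] [BorelSpace X] [BorelSpace Y]
  {μ : Measure X} {ν : Measure Y} [IsFiniteMeasure μ] [IsFiniteMeasure ν]
  {v : Lp ℂ 2 ν} {a : C(X, ℂ)} {m : C(X × Y, ℂ)}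
  {H : WithLp 2 (Lp ℂ 2 μ × Lp ℂ 2 (μ.prod ν)) →L[ℂ] WithLp 2 (Lp ℂ 2 μ × Lp ℂ 2 (μ.prod ν))}

namespace IsChannelOperator

theorem apply_tensorFiber (hH : IsChannelOperator v a m H) (χ : Lp ℂ 2 μ)
    (x : WithLp 2 (ℂ × Lp ℂ 2 ν)) : H (tensorFiber χ x) =
      WithLp.toLp 2 (mulLp a (x.fst • χ) + (inner ℂ v x.snd : ℂ) • χ,
        tensorL2 χ (x.fst • v) + mulLp m (tensorL2 χ x.snd)) := by
  refine congrArg (WithLp.toLp 2) (Prod.ext (Lp.ext ?_) (Lp.ext ?_))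
  · refine (hH _).1.trans ?_
    filter_upwards [Measure.ae_ae_of_ae_prod (coeFn_tensorL2 χ x.snd),
      Lp.coeFn_add (mulLp a (x.fst • χ)) ((inner ℂ v x.snd : ℂ) • χ), coeFn_mulLp a (x.fst • χ),
      Lp.coeFn_smul (inner ℂ v x.snd : ℂ) χ] with p htensor hadd hmul hsmul
    have hint : ∫ t, starRingEnd ℂ (v t) * tensorL2 χ x.snd (p, t) ∂ν =
        inner ℂ v x.snd * χ p := by
      rw [L2.inner_def, ← integral_mul_const]
      refine integral_congr_ae ?_
      filter_upwards [htensor] with t ht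
      rw [ht, RCLike.inner_apply']
      ring
    rw [hadd, Pi.add_apply, hmul, hsmul, Pi.smul_apply, smul_eq_mul, ← hint]
    rfl
  · refine (hH _).2.trans ?_
    filter_upwards [coeFn_tensorL2 χ (x.fst • v), coeFn_mulLp m (tensorL2 χ x.snd),
      Lp.coeFn_add (tensorL2 χ (x.fst • v)) (mulLp m (tensorL2 χ x.snd)),
      Measure.quasiMeasurePreserving_fst.ae (Lp.coeFn_smul x.fst χ),
      Measure.quasiMeasurePreserving_snd.ae (Lp.coeFn_smul x.fst v)]
      with y htensor hmul hadd hsmulχ hsmulv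
    have hcomm : v y.2 * (x.fst • χ) y.1 = χ y.1 * (x.fst • v) y.2 := by
      rw [hsmulχ, hsmulv, Pi.smul_apply, Pi.smul_apply, smul_eq_mul, smul_eq_mul]
      ring
    rw [hadd, Pi.add_apply, htensor, hmul, ← hcomm]
    rfl

theorem apply_tensorFiber_sub (hH : IsChannelOperator v a m H) (p : X) (χ : Lp ℂ 2 μ)
    (x : WithLp 2 (ℂ × Lp ℂ 2 ν)) :
    H (tensorFiber χ x) - tensorFiber χ (friedrichs v (a p) (m.curry p) x) =
      WithLp.toLp 2 (mulLp (a - .const X (a p)) (x.fst • χ),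
        mulLp (m - (m.curry p).comp .snd) (tensorL2 χ x.snd)) := by
  rw [hH.apply_tensorFiber, tensorFiber_apply, friedrichs, ← WithLp.toLp_sub, mulLp_sub, mulLp_sub,
    mulLp_const, ← tensorL2_mulLp]
  refine congrArg (WithLp.toLp 2) (Prod.ext ?_ ?_)
  · change _ - (a p * x.fst + inner ℂ v x.snd) • χ = _
    rw [add_smul, mul_smul]
    exact add_sub_add_right_eq_sub _ _ _
  · change _ - tensorL2 χ (x.fst • v + mulLp (m.curry p) x.snd) = _
    rw [map_add]
    exact add_sub_add_left_eq_sub _ _ _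

theorem eventually_norm_apply_tensorFiber_sub_le (hH : IsChannelOperator v a m H) {p : X}
    {χ : ℕ → Lp ℂ 2 μ} (hχ : ConcentratesAt χ p) {ε : ℝ} (hε : 0 < ε) :
    ∀ᶠ n in atTop, ∀ x,
      ‖H (tensorFiber (χ n) x) - tensorFiber (χ n) (friedrichs v (a p) (m.curry p) x)‖ ≤
        ε * ‖tensorFiber (χ n) x‖ := by
  filter_upwards [
    hχ.eventually_norm_mulLp_le (g := a - .const X (a p)) (sub_self _) (half_pos hε),
    hχ.eventually_norm_mulLp_tensorL2_le (ν := ν) (g := m - (m.curry p).comp .snd)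
      (fun _ => sub_self _) (half_pos hε)] with n hfst hsnd x
  rw [hH.apply_tensorFiber_sub]
  refine (norm_toLp_le_add _ _).trans ((add_le_add (hfst x.fst) (hsnd x.snd)).trans ?_)
  have hle₁ : ‖x.fst • χ n‖ ≤ ‖tensorFiber (χ n) x‖ := WithLp.norm_fst_le _ (tensorFiber (χ n) x)
  have hle₂ : ‖tensorL2 (χ n) x.snd‖ ≤ ‖tensorFiber (χ n) x‖ :=
    WithLp.norm_snd_le _ (tensorFiber (χ n) x)
  nlinarith

theorem mem_essSpec [μ.IsOpenPosMeasure] (hH : IsChannelOperator v a m H) {p : X}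
    [(𝓝[≠] p).NeBot] {z : ℂ}
    (hz : ∀ ε > 0, ∃ x ≠ 0, ‖friedrichs v (a p) (m.curry p) x - z • x‖ ≤ ε * ‖x‖) :
    z ∈ essSpec H := by
  obtain ⟨χ, hχ, hχp⟩ := exists_orthonormal_concentratesAt μ p
  choose x hx0 hx using fun n : ℕ => hz (1 / (n + 1)) Nat.one_div_pos_of_nat
  have hnorm (n : ℕ) : ‖tensorFiber (χ n) (x n)‖ = ‖x n‖ := norm_tensorFiber (hχ.1 n) _
  refine mem_essSpec_of_pairwise_orthogonal (f := fun n => tensorFiber (χ n) (x n))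
    (fun n => norm_ne_zero_iff.1 (hnorm n ▸ norm_ne_zero_iff.2 (hx0 n)))
    (fun i j hij => (inner_tensorFiber ..).trans (mul_eq_zero_of_left (hχ.2 hij) _)) fun ε hε => ?_
  have hsmall : ∀ᶠ n : ℕ in atTop, 1 / ((n : ℝ) + 1) ≤ ε / 2 :=
    tendsto_one_div_add_atTop_nhds_zero_nat.eventually_le_const (half_pos hε)
  filter_upwards [hH.eventually_norm_apply_tensorFiber_sub_le hχp (half_pos hε), hsmall]
    with n hn hsmall
  calc ‖H (tensorFiber (χ n) (x n)) - z • tensorFiber (χ n) (x n)‖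
      ≤ ‖H (tensorFiber (χ n) (x n)) -
            tensorFiber (χ n) (friedrichs v (a p) (m.curry p) (x n))‖ +
          ‖tensorFiber (χ n) (friedrichs v (a p) (m.curry p) (x n) - z • x n)‖ := by
        rw [map_sub, map_smul]
        exact norm_sub_le_norm_sub_add_norm_sub _ _ _
    _ ≤ ε / 2 * ‖tensorFiber (χ n) (x n)‖ + ε / 2 * ‖x n‖ := by
        rw [norm_tensorFiber (hχ.1 n) (friedrichs _ _ _ _ - _)]
        gcongr
        · exact hn (x n)
        · exact (hx n).trans (by gcongr)
    _ = ε * ‖tensorFiber (χ n) (x n)‖ := by rw [hnorm]; ring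

theorem channelSpectrum_subset_essSpec [PerfectSpace X] [PerfectSpace Y] [μ.IsOpenPosMeasure]
    [ν.IsOpenPosMeasure] (hH : IsChannelOperator v a m H) :
    channelSpectrum v a m ⊆ essSpec H := by
  have hperfectX (p : X) : (𝓝[≠] p).NeBot := PerfectSpace.not_isolated p
  have hperfectY (q : Y) : (𝓝[≠] q).NeBot := PerfectSpace.not_isolated q
  rintro z (⟨⟨p, q⟩, rfl⟩ | ⟨k, hz, hΔ⟩)
  · exact hH.mem_essSpec fun ε hε =>
      exists_norm_friedrichs_sub_smul_le v (a p) (m.curry p) q hε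
  · obtain ⟨x, hx0, hx⟩ := exists_friedrichs_eq_smul hz hΔ
    refine hH.mem_essSpec (p := k) fun ε hε => ⟨x, hx0, ?_⟩
    rw [hx, sub_self, norm_zero]
    positivity

theorem snd_sub_smul_eq_mulLp (hH : IsChannelOperator v a m H) (z : ℂ) (g : Lp ℂ 2 (μ.prod ν)) :
    (H (WithLp.toLp 2 (0, g))).snd - z • g = mulLp (m - .const (X × Y) z) g := by
  rw [mulLp_sub, mulLp_const]
  congr 1
  refine eq_mulLp_iff.2 ((hH _).2.trans ?_)
  filter_upwards [Measure.quasiMeasurePreserving_fst.ae (Lp.coeFn_zero ℂ 2 μ)] with x hx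
  change v x.2 * (0 : Lp ℂ 2 μ) x.1 + m x * g x = _
  rw [hx, Pi.zero_apply, mul_zero, zero_add]

/-- The Schur complement of `m - z` is multiplication by the Fredholm determinant. -/
theorem fst_sub_smul_eq_mulLp (hH : IsChannelOperator v a m H) {z : ℂ} (hz : ∀ x, m x ≠ z)
    {δ : C(X, ℂ)} (hδ : ∀ k, δ k = friedrichsDelta v (a k) (m.curry k) z)
    {f : WithLp 2 (Lp ℂ 2 μ × Lp ℂ 2 (μ.prod ν))} (hf : (H f).snd = z • f.snd) :
    (H f).fst - z • f.fst = mulLp δ f.fst := by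
  refine eq_mulLp_iff.2 ?_
  filter_upwards [(hH f).1, Lp.coeFn_sub (H f).fst (z • f.fst), Lp.coeFn_smul z f.fst,
    Measure.ae_ae_of_ae_prod (hH.snd_ae_eq_of_snd_eq_smul hz hf)] with p hfst hsub hsmul hsnd
  have hint : ∫ t, starRingEnd ℂ (v t) * f.snd (p, t) ∂ν =
      -(∫ t, (‖v t‖ : ℂ) ^ 2 / (m (p, t) - z) ∂ν) * f.fst p := by
    rw [← integral_neg, ← integral_mul_const]
    refine integral_congr_ae ?_
    filter_upwards [hsnd] with t ht
    rw [ht, ← Complex.conj_mul']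
    ring
  rw [hsub, Pi.sub_apply, hfst, hint, hsmul, Pi.smul_apply, smul_eq_mul, hδ, friedrichsDelta]
  simp only [ContinuousMap.curry_apply]
  ring

theorem spectrum_subset_channelSpectrum (hH : IsChannelOperator v a m H) :
    spectrum ℂ H ⊆ channelSpectrum v a m := by
  intro z
  contrapose!
  intro hzm
  have hz (x : X × Y) : m x ≠ z := fun h => hzm (Or.inl ⟨x, h⟩)
  let δ : C(X, ℂ) := ⟨_, continuous_friedrichsDelta v a hz⟩
  let e := WithLp.prodContinuousLinearEquiv 2 ℂ (Lp ℂ 2 μ) (Lp ℂ 2 (μ.prod ν))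
  let T := e.toContinuousLinearMap ∘L (H - algebraMap ℂ _ z) ∘L e.symm.toContinuousLinearMap
  have hD : (fun y => (T (0, y)).2) = mulLp (m - .const (X × Y) z) :=
    funext fun y => hH.snd_sub_smul_eq_mulLp z y
  have hT : Function.Bijective T :=
    bijective_of_schurComplement T.toLinearMap.toAddMonoidHom (S := mulLp δ)
      (mulLp_bijective fun k hk => hzm (Or.inr ⟨k, fun q => hz _, hk⟩))
      (hD ▸ mulLp_bijective fun x => sub_ne_zero.2 (hz x))
      fun x y hxy => hH.fst_sub_smul_eq_mulLp (f := WithLp.toLp 2 (x, y)) hz (fun _ => rfl)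
        (sub_eq_zero.1 hxy)
  rw [spectrum.notMem_iff, IsUnit.sub_iff, ContinuousLinearMap.isUnit_iff_bijective]
  exact (e.bijective.of_comp_iff' _).1 ((e.symm.bijective.of_comp_iff _).1 hT)

end IsChannelOperator
end Channel

theorem channel_purely_essential_general {X Y : Type*} [MetricSpace X] [MetricSpace Y]
    [CompactSpace X] [CompactSpace Y] [PerfectSpace X] [PerfectSpace Y] [MeasurableSpace X]
    [MeasurableSpace Y] [BorelSpace X] [BorelSpace Y] {μ : Measure X} {ν : Measure Y}
    [IsFiniteMeasure μ] [IsFiniteMeasure ν] [μ.IsOpenPosMeasure] [ν.IsOpenPosMeasure]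
    {v : Lp ℂ 2 ν} {a : C(X, ℂ)} {m : C(X × Y, ℂ)}
    {H : WithLp 2 (Lp ℂ 2 μ × Lp ℂ 2 (μ.prod ν)) →L[ℂ]
      WithLp 2 (Lp ℂ 2 μ × Lp ℂ 2 (μ.prod ν))} (hH : IsChannelOperator v a m H) :
    spectrum ℂ H = channelSpectrum v a m ∧ essSpec H = channelSpectrum v a m ∧
      spectrum ℂ H \ essSpec H = ∅ := by
  have hle := hH.channelSpectrum_subset_essSpec
  have hge := hH.spectrum_subset_channelSpectrum
  have hess := essSpec_subset_spectrum H
  exact ⟨hge.antisymm (hle.trans hess), (hess.trans hge).antisymm hle,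
    sdiff_eq_empty.2 (hge.trans hle)⟩

section Torus

theorem perfectSpace_pi_addCircle (ι : Type*) [Nonempty ι] (p : ℝ) [hp : Fact (0 < p)] :
    PerfectSpace (ι → AddCircle p) := by
  have : Infinite (Ico 0 (0 + p)) := (Ico_infinite (lt_add_of_pos_right 0 hp.out)).to_subtype
  have : Infinite (AddCircle p) := .of_injective _ (AddCircle.equivIco p 0).symm.injective
  infer_instance

theorem range_ofReal_comp_eq_image_Icc {X : Type*} [TopologicalSpace X] [CompactSpace X]
    [ConnectedSpace X] {g : X → ℝ} (hg : Continuous g) :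
    range (fun x => (g x : ℂ)) = Complex.ofReal '' Icc (⨅ x, g x) (⨆ x, g x) := by
  rw [range_comp' Complex.ofReal g,
    eq_Icc_of_connected_compact (isConnected_range hg) (isCompact_range hg)]
  rfl

variable {v₁ : Td d → ℝ} {w₁ : Td d → Td d → ℝ} {w₂ : Td d → Td d → Td d → ℝ} {K : Td d}
  {v : L2 d} {a : C(Td d, ℂ)} {m : C(Td d × Td d, ℂ)}

theorem Delta_eq_friedrichsDelta (hv : v =ᵐ[volume] fun t => (Real.sqrt 2 : ℂ)⁻¹ * v₁ t)
    (ha : ∀ p, a p = w₁ K p) (hm : ∀ p q, m (p, q) = w₂ K p q) (k : Td d) (z : ℂ) :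
    Delta v₁ w₁ w₂ K k z = friedrichsDelta v (a k) (m.curry k) z := by
  rw [Delta, friedrichsDelta, ha, ← integral_const_mul]
  congr 1
  refine integral_congr_ae ?_
  filter_upwards [hv] with t ht
  have hsqrt : (Real.sqrt 2 : ℂ) ^ 2 = 2 := by exact_mod_cast Real.sq_sqrt zero_le_two
  have hnorm : (‖v t‖ : ℂ) ^ 2 = 1 / 2 * (v₁ t : ℂ) ^ 2 := by
    rw [ht, ← Complex.conj_mul', map_mul, map_inv₀, conj_ofReal, conj_ofReal, ← hsqrt]
    ring
  rw [hnorm, ContinuousMap.curry_apply, hm, mul_div_assoc]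

theorem SigK_eq_channelSpectrum (hv : v =ᵐ[volume] fun t => (Real.sqrt 2 : ℂ)⁻¹ * v₁ t)
    (ha : ∀ p, a p = w₁ K p) (hm : ∀ p q, m (p, q) = w₂ K p q) :
    SigK v₁ w₁ w₂ K = channelSpectrum v a m := by
  have hw₂ : Continuous fun x : Td d × Td d => w₂ K x.1 x.2 :=
    (Complex.continuous_re.comp m.continuous).congr fun x => by
      rw [Function.comp_apply, hm, ofReal_re]
  have hbig : bigBand w₂ K = range m :=
    (range_ofReal_comp_eq_image_Icc hw₂).symm.trans
      (congrArg range (funext fun x => (hm x.1 x.2).symm))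
  have hband (k : Td d) : bandKk w₂ K k = range fun q => m (k, q) :=
    (range_ofReal_comp_eq_image_Icc (hw₂.comp (Continuous.prodMk_right k))).symm.trans
      (congrArg range (funext fun q => (hm k q).symm))
  simp only [SigK, LamK, channelSpectrum, hbig, hband, Delta_eq_friedrichsDelta hv ha hm,
    mem_range, not_exists, ne_eq]

theorem IsChannel.isChannelOperator (hv : v =ᵐ[volume] fun t => (Real.sqrt 2 : ℂ)⁻¹ * v₁ t)
    (ha : ∀ p, a p = w₁ K p) (hm : ∀ p q, m (p, q) = w₂ K p q) {H : HchSp d →L[ℂ] HchSp d}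
    (hH : IsChannel v₁ w₁ w₂ K H) : IsChannelOperator v a m H := by
  refine fun f => ⟨(hH f).1.trans (.of_forall fun p => ?_), (hH f).2.trans ?_⟩
  · have hint : ∫ t, starRingEnd ℂ (v t) * f.snd (p, t) =
        (Real.sqrt 2 : ℂ)⁻¹ * ∫ t, (v₁ t : ℂ) * f.snd (p, t) := by
      rw [← integral_const_mul]
      refine integral_congr_ae ?_
      filter_upwards [hv] with t ht
      rw [ht, map_mul, map_inv₀, conj_ofReal, conj_ofReal, mul_assoc]
    change _ = a p * f.fst p + _
    rw [hint, ha]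
    rfl
  · filter_upwards [Measure.quasiMeasurePreserving_snd.ae hv] with x hx
    rw [hx, hm]
    rfl

theorem IsChannel.exists_isChannelOperator (hv₁ : Continuous v₁) (hw₁ : Continuous (w₁ K))
    (hw₂ : Continuous fun x : Td d × Td d => w₂ K x.1 x.2) {H : HchSp d →L[ℂ] HchSp d}
    (hH : IsChannel v₁ w₁ w₂ K H) :
    ∃ (v : L2 d) (a : C(Td d, ℂ)) (m : C(Td d × Td d, ℂ)),
      IsChannelOperator v a m H ∧ SigK v₁ w₁ w₂ K = channelSpectrum v a m := by
  let g : C(Td d, ℂ) := ⟨fun t => (Real.sqrt 2 : ℂ)⁻¹ * v₁ t, by fun_prop⟩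
  let a : C(Td d, ℂ) := ⟨fun p => w₁ K p, by fun_prop⟩
  let m : C(Td d × Td d, ℂ) := ⟨fun x => w₂ K x.1 x.2, by fun_prop⟩
  have hg := ContinuousMap.coeFn_toLp (p := 2) (𝕜 := ℂ) volume g
  exact ⟨ContinuousMap.toLp 2 volume ℂ g, a, m,
    hH.isChannelOperator hg (fun _ => rfl) (fun _ _ => rfl),
    SigK_eq_channelSpectrum hg (fun _ => rfl) (fun _ _ => rfl)⟩

end Torus

/-- For every `K ∈ T^d`, the channel operator `H_ch(K)` has purely essential
spectrum and `σ(H_ch(K)) = σ_ess(H_ch(K)) = Σ_K`, `σ_disc(H_ch(K)) = ∅`. -/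
theorem channel_purely_essential
    (d : ℕ) (hd : 1 ≤ d)
    (w₀ v₀ v₁ : Td d → ℝ) (w₁ : Td d → Td d → ℝ) (w₂ : Td d → Td d → Td d → ℝ)
    (hw₀ : Continuous w₀) (hv₀ : Continuous v₀) (hv₁ : Continuous v₁)
    (hw₁ : Continuous fun x : Td d × Td d => w₁ x.1 x.2)
    (hw₂ : Continuous fun x : Td d × Td d × Td d => w₂ x.1 x.2.1 x.2.2)
    (hsym : ∀ K p q : Td d, w₂ K p q = w₂ K q p)
    (K : Td d) (Hc : HchSp d →L[ℂ] HchSp d)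
    (hHc : IsChannel v₁ w₁ w₂ K Hc) :
    spectrum ℂ Hc = SigK v₁ w₁ w₂ K ∧
    essSpec Hc = SigK v₁ w₁ w₂ K ∧
    spectrum ℂ Hc \ essSpec Hc = ∅ := by
  have : Nonempty (Fin d) := ⟨⟨0, hd⟩⟩
  have : PerfectSpace (Td d) := perfectSpace_pi_addCircle (Fin d) (2 * Real.pi)
  obtain ⟨v, a, m, hH, hSig⟩ :=
    hHc.exists_isChannelOperator hv₁ (hw₁.comp (.prodMk_right K)) (hw₂.comp (.prodMk_right K))
  rw [hSig]
  exact channel_purely_essential_general hH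
end
end
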